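/- arXiv:2103.11205 — 2 statements merged into one kernel-verified Lean document; each statement's English description precedes it below -/
import Mathlib

section
/- In the one-dimensional Gaussian case, where U₁ and U₂ are independent centered Gaussian random variables with variances σ₁², σ₂² > 0, Moran's test φ is a regular test of level α that is inadmissible among regular tests: φ ∈ Φ₀(α) \ A₀(α). -/
open MeasureTheory ProbabilityTheory

/-!
The laws `P θ` form an exponential family: `P θ` is `P 0` tilted by `exp (θ * T)` with
`T x = x.1 / v₁ + x.2 / v₂`. For `θ ≠ 0` the tilting function is a strictly convex function of `T`.
Moran's test accepts on sets `B` and `C` where `T` is respectively below and above the range of `T`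
on a part `A` of its rejection region. Moving rejection mass from `A` to `B ∪ C`, in proportions
that keep the means of `1` and of `T` fixed under `P 0`, spreads out the law of `T` on the rejection
region. By Jensen's inequality this increases the mean of every strictly convex function of `T`, so
the level is unchanged while the power increases strictly at every `θ ≠ 0`.
-/

open Filter Set Topology

section Measure

theorem integral_lt_integral_of_ae_lt {Ω : Type*} {mΩ : MeasurableSpace Ω} {μ : Measure Ω}
    [NeZero μ] {f g : Ω → ℝ} (hf : Integrable f μ) (hg : Integrable g μ)
    (h : ∀ᵐ x ∂μ, f x < g x) : ∫ x, f x ∂μ < ∫ x, g x ∂μ := by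
  rw [← sub_pos, ← integral_sub hg hf,
    integral_pos_iff_support_of_nonneg_ae (h.mono fun x hx => (sub_pos.2 hx).le) (hg.sub hf)]
  have hsupp : Function.support (fun x => g x - f x) =ᵐ[μ] univ :=
    eventuallyEq_univ.2 (h.mono fun x hx => (sub_pos.2 hx).ne')
  rw [measure_congr hsupp]
  exact NeZero.pos _

theorem integrable_cond {Ω : Type*} {mΩ : MeasurableSpace Ω} {μ : Measure Ω} {h : Ω → ℝ}
    (hh : Integrable h μ) {s : Set Ω} : Integrable h μ[|s] := by
  rcases eq_or_ne (μ s) 0 with hs₀ | hs₀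
  · simp [cond_eq_zero_of_meas_eq_zero hs₀]
  · exact hh.restrict.smul_measure (ENNReal.inv_ne_top.2 hs₀)

theorem integral_indicator_one_mul_eq_integral_cond {Ω : Type*} {mΩ : MeasurableSpace Ω}
    (μ : Measure Ω) [IsFiniteMeasure μ] {s : Set Ω} (hs : MeasurableSet s) (h : Ω → ℝ) :
    ∫ x, s.indicator 1 x * h x ∂μ = μ.real s * ∫ x, h x ∂μ[|s] := by
  have hind : (fun x => s.indicator 1 x * h x) = s.indicator h := by
    funext x
    by_cases hx : x ∈ s <;> simp [hx]
  rw [hind, integral_indicator hs, ProbabilityTheory.cond, integral_smul_measure,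
    ENNReal.toReal_inv, ← measureReal_def, smul_eq_mul]
  rcases eq_or_ne (μ.real s) 0 with h0 | h0
  · rw [Measure.restrict_eq_zero.2 ((measureReal_eq_zero_iff).1 h0)]
    simp
  · rw [mul_inv_cancel_left₀ h0]

theorem tilted_prod_tilted {α β : Type*} {mα : MeasurableSpace α} {mβ : MeasurableSpace β}
    (μ : Measure α) (ν : Measure β) [SFinite μ] [SFinite ν] {f : α → ℝ} {g : β → ℝ}
    (hf : Measurable f) (hg : Measurable g) :
    (μ.tilted f).prod (ν.tilted g) = (μ.prod ν).tilted (fun x => f x.1 + g x.2) := by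
  simp only [Measure.tilted, Real.exp_add]
  rw [prod_withDensity (by fun_prop) (by fun_prop),
    integral_prod_mul (fun x => Real.exp (f x)) (fun y => Real.exp (g y))]
  congr with x
  rw [← ENNReal.ofReal_mul (by positivity), div_mul_div_comm]

end Measure

section Quantile

theorem apply_sInf_setOf_le_eq {f : ℝ → ℝ} {p : ℝ} (hf : Continuous f) (hmono : Monotone f)
    (hlt : ∃ t, f t < p) (hgt : ∃ t, p < f t) : f (sInf {t | p ≤ f t}) = p := by
  obtain ⟨a, ha⟩ := hlt
  obtain ⟨b, hb⟩ := hgt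
  have hbdd : BddBelow {t | p ≤ f t} :=
    ⟨a, fun t ht => (hmono.reflect_lt (ha.trans_le ht)).le⟩
  obtain ⟨t, rfl⟩ := mem_range_of_exists_le_of_exists_ge hf ⟨a, ha.le⟩ ⟨b, hb.le⟩
  exact le_antisymm (hmono (csInf_le hbdd (le_refl (f t))))
    ((isClosed_le continuous_const hf).csInf_mem ⟨t, le_refl (f t)⟩ hbdd)

variable (μ : Measure ℝ) [IsProbabilityMeasure μ] [NullSingletonClass μ]

theorem continuous_cdf : Continuous (cdf μ) := by
  refine continuous_iff_continuousAt.2 fun x =>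
    ((monotone_cdf μ).continuousAt_iff_leftLim_eq_rightLim).2 ?_
  rw [StieltjesFunction.rightLim_eq]
  have hx : (cdf μ).measure {x} = 0 := by rw [measure_cdf]; exact measure_singleton x
  rw [StieltjesFunction.measure_singleton, ENNReal.ofReal_eq_zero, sub_nonpos] at hx
  exact le_antisymm ((monotone_cdf μ).leftLim_le le_rfl) hx

theorem measureReal_Iic_sInf_setOf_le_eq {p : ℝ} (hp : p ∈ Ioo 0 1) :
    μ.real (Iic (sInf {t | p ≤ μ.real (Iic t)})) = p := by
  simp only [← cdf_eq_real]
  exact apply_sInf_setOf_le_eq (continuous_cdf μ) (monotone_cdf μ)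
    ((tendsto_cdf_atBot μ).eventually_lt_const hp.1).exists
    ((tendsto_cdf_atTop μ).eventually_const_lt hp.2).exists

end Quantile

theorem tendsto_cocompact_zero_iff_of_nonneg {X : Type*} [TopologicalSpace X] {f : X → ℝ}
    (hf : ∀ x, 0 ≤ f x) :
    Tendsto f (cocompact X) (𝓝 0) ↔ ∀ ε > 0, ∃ K, IsCompact K ∧ {x | ε ≤ f x} ⊆ K := by
  have hsmall : Tendsto f (cocompact X) (𝓝 0) ↔ ∀ ε > 0, ∀ᶠ x in cocompact X, f x < ε := by
    simp only [Metric.tendsto_nhds, Real.dist_0_eq_abs, abs_of_nonneg (hf _)]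
  simp only [hsmall, Filter.Eventually, mem_cocompact', compl_ofPred, not_lt]

section Spreading

variable {Ω : Type*} {mΩ : MeasurableSpace Ω}

theorem strictConvexOn_exp_mul {t : ℝ} (ht : t ≠ 0) :
    StrictConvexOn ℝ univ (fun x => Real.exp (t * x)) := by
  refine ⟨convex_univ, fun x _ y _ hxy a b ha hb hab => ?_⟩
  have h := strictConvexOn_exp.2 (mem_univ (t * x)) (mem_univ (t * y))
    ((mul_right_injective₀ ht).ne hxy) ha hb hab
  simpa only [smul_eq_mul, mul_add, mul_left_comm t] using h

theorem mul_integral_comp_lt_of_strictConvexOn {μ : Measure Ω} [IsProbabilityMeasure μ]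
    {T : Ω → ℝ} {f : ℝ → ℝ} {m M : ℝ} (hf : StrictConvexOn ℝ univ f)
    (hT : ∀ᵐ x ∂μ, T x ∈ Ioo m M) (hTi : Integrable T μ) (hfi : Integrable (fun x => f (T x)) μ) :
    (M - m) * ∫ x, f (T x) ∂μ < (M - ∫ x, T x ∂μ) * f m + (∫ x, T x ∂μ - m) * f M := by
  have hMT : Integrable (fun x => (M - T x) * f m) μ :=
    ((integrable_const M).sub hTi).mul_const _
  have hTm : Integrable (fun x => (T x - m) * f M) μ :=
    (hTi.sub (integrable_const m)).mul_const _
  calc (M - m) * ∫ x, f (T x) ∂μ = ∫ x, (M - m) * f (T x) ∂μ := (integral_const_mul _ _).symm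
    _ < ∫ x, ((M - T x) * f m + (T x - m) * f M) ∂μ :=
      integral_lt_integral_of_ae_lt (hfi.const_mul _) (hMT.add hTm) <| hT.mono fun x hx =>
        hf.secant_strict_mono_aux1 (mem_univ m) (mem_univ M) hx.1 hx.2
    _ = (M - ∫ x, T x ∂μ) * f m + (∫ x, T x ∂μ - m) * f M := by
      rw [integral_add hMT hTm, integral_mul_const, integral_mul_const,
        integral_sub (integrable_const M) hTi, integral_sub hTi (integrable_const m)]
      simp

-- The weight matches the means of `T`, so that Jensen's inequality for `ν₁` and `ν₂` compares
-- their mixture with the chord of `f` between the two means, which lies above `f` on `κ`.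
theorem exists_weight_integral_comp_lt (κ ν₁ ν₂ : Measure Ω) [IsProbabilityMeasure κ]
    [IsProbabilityMeasure ν₁] [IsProbabilityMeasure ν₂] {T : Ω → ℝ}
    (hκ : Integrable T κ) (hν₁ : Integrable T ν₁) (hν₂ : Integrable T ν₂)
    (hT : ∀ᵐ x ∂κ, T x ∈ Ioo (∫ y, T y ∂ν₁) (∫ y, T y ∂ν₂)) :
    ∃ w ∈ Icc (0 : ℝ) 1, ∀ f : ℝ → ℝ, StrictConvexOn ℝ univ f →
      Integrable (fun x => f (T x)) κ → Integrable (fun x => f (T x)) ν₁ →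
      Integrable (fun x => f (T x)) ν₂ →
      ∫ x, f (T x) ∂κ < w * ∫ x, f (T x) ∂ν₁ + (1 - w) * ∫ x, f (T x) ∂ν₂ := by
  set m := ∫ x, T x ∂ν₁
  set M := ∫ x, T x ∂ν₂
  set t := ∫ x, T x ∂κ
  have hmt : m < t := by
    simpa using integral_lt_integral_of_ae_lt (integrable_const m) hκ (hT.mono fun x hx => hx.1)
  have htM : t < M := by
    simpa using integral_lt_integral_of_ae_lt hκ (integrable_const M) (hT.mono fun x hx => hx.2)
  have hmM : 0 < M - m := by linarith
  have hw_le : (M - t) / (M - m) ≤ 1 := (div_le_one hmM).2 (sub_le_sub_left hmt.le M)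
  refine ⟨(M - t) / (M - m), ⟨div_nonneg (sub_pos.2 htM).le hmM.le, hw_le⟩,
    fun f hf hfκ hf₁ hf₂ => ?_⟩
  have hcont : ContinuousOn f univ := hf.convexOn.continuousOn isOpen_univ
  have hJensen₁ : f m ≤ ∫ x, f (T x) ∂ν₁ :=
    hf.convexOn.map_integral_le hcont isClosed_univ (by simp) hν₁ hf₁
  have hJensen₂ : f M ≤ ∫ x, f (T x) ∂ν₂ :=
    hf.convexOn.map_integral_le hcont isClosed_univ (by simp) hν₂ hf₂
  have hw : 1 - (M - t) / (M - m) = (t - m) / (M - m) := by field_simp; ring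
  rw [hw, div_mul_eq_mul_div, div_mul_eq_mul_div, ← add_div, lt_div_iff₀' hmM]
  calc (M - m) * ∫ x, f (T x) ∂κ < (M - t) * f m + (t - m) * f M :=
        mul_integral_comp_lt_of_strictConvexOn hf hT hκ hfκ
    _ ≤ (M - t) * ∫ x, f (T x) ∂ν₁ + (t - m) * ∫ x, f (T x) ∂ν₂ := by
      gcongr

end Spreading

section Test

variable {Ω : Type*} [MeasurableSpace Ω] {φ : Ω → ℝ}

/-- A randomized test, as a critical function: `φ x` is the probability of rejecting the null
hypothesis after observing `x`. -/
structure IsTest (φ : Ω → ℝ) : Prop where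
  measurable : Measurable φ
  mem_Icc : ∀ x, φ x ∈ Icc (0 : ℝ) 1

theorem isTest_indicator_one {s : Set Ω} (hs : MeasurableSet s) :
    IsTest (s.indicator (1 : Ω → ℝ)) where
  measurable := measurable_one.indicator hs
  mem_Icc x := by by_cases hx : x ∈ s <;> simp [hx]

theorem IsTest.integrable_mul (hφ : IsTest φ) {μ : Measure Ω} {h : Ω → ℝ} (hh : Integrable h μ) :
    Integrable (fun x => φ x * h x) μ :=
  hh.bdd_mul hφ.measurable.aestronglyMeasurable (c := 1) <| ae_of_all _ fun x => by
    rw [Real.norm_of_nonneg (hφ.mem_Icc x).1]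
    exact (hφ.mem_Icc x).2

theorem IsTest.reallocate (hφ : IsTest φ) {A B C : Set Ω} (hA : MeasurableSet A)
    (hB : MeasurableSet B) (hC : MeasurableSet C) (hφA : ∀ x ∈ A, φ x = 1) (hφB : ∀ x ∈ B, φ x = 0)
    (hφC : ∀ x ∈ C, φ x = 0) (hBC : Disjoint B C) {p q r : ℝ} (hp : p ∈ Icc (0 : ℝ) 1)
    (hq : q ∈ Icc (0 : ℝ) 1) (hr : r ∈ Icc (0 : ℝ) 1) :
    IsTest fun x => φ x - p * A.indicator 1 x + q * B.indicator 1 x + r * C.indicator 1 x where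
  measurable :=
    ((hφ.measurable.sub ((measurable_one.indicator hA).const_mul p)).add
      ((measurable_one.indicator hB).const_mul q)).add ((measurable_one.indicator hC).const_mul r)
  mem_Icc x := by
    obtain ⟨hp₀, hp₁⟩ := hp
    obtain ⟨hq₀, hq₁⟩ := hq
    obtain ⟨hr₀, hr₁⟩ := hr
    have := hφ.mem_Icc x
    have := hφA x
    have := hφB x
    have := hφC x
    have : x ∈ B → x ∉ C := fun h => disjoint_left.1 hBC h
    by_cases hxA : x ∈ A <;> by_cases hxB : x ∈ B <;> by_cases hxC : x ∈ C <;> simp_all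

theorem IsTest.integral_reallocate_mul (hφ : IsTest φ) {μ : Measure Ω} [IsFiniteMeasure μ]
    {A B C : Set Ω} (hA : MeasurableSet A) (hB : MeasurableSet B) (hC : MeasurableSet C)
    {h : Ω → ℝ} (hh : Integrable h μ) (p q r : ℝ) :
    ∫ x, (φ x - p * A.indicator 1 x + q * B.indicator 1 x + r * C.indicator 1 x) * h x ∂μ =
      ∫ x, φ x * h x ∂μ - p * (μ.real A * ∫ x, h x ∂μ[|A]) + q * (μ.real B * ∫ x, h x ∂μ[|B]) +
        r * (μ.real C * ∫ x, h x ∂μ[|C]) := by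
  have hint {E : Set Ω} (hE : MeasurableSet E) (t : ℝ) :
      Integrable (fun x => t * (E.indicator 1 x * h x)) μ :=
    ((isTest_indicator_one hE).integrable_mul hh).const_mul t
  have hφh := hφ.integrable_mul hh
  simp only [add_mul, sub_mul, mul_assoc]
  rw [integral_add (by exact (hφh.sub (hint hA p)).add (hint hB q)) (hint hC r),
    integral_add (by exact hφh.sub (hint hA p)) (hint hB q), integral_sub hφh (hint hA p)]
  simp only [integral_const_mul, integral_indicator_one_mul_eq_integral_cond μ hA,
    integral_indicator_one_mul_eq_integral_cond μ hB,
    integral_indicator_one_mul_eq_integral_cond μ hC]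

theorem IsTest.exists_integral_mul_eq (hφ : IsTest φ) (μ : Measure Ω) [IsFiniteMeasure μ]
    {A B C : Set Ω} (hA : MeasurableSet A) (hB : MeasurableSet B) (hC : MeasurableSet C)
    (hφA : ∀ x ∈ A, φ x = 1) (hφB : ∀ x ∈ B, φ x = 0) (hφC : ∀ x ∈ C, φ x = 0)
    (hBC : Disjoint B C) (hA₀ : μ A ≠ 0) (hB₀ : μ B ≠ 0) (hC₀ : μ C ≠ 0) {w : ℝ}
    (hw : w ∈ Icc (0 : ℝ) 1) :
    ∃ s > 0, ∃ ψ, IsTest ψ ∧ ∀ h : Ω → ℝ, Integrable h μ →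
      ∫ x, ψ x * h x ∂μ = ∫ x, φ x * h x ∂μ +
        s * (w * ∫ x, h x ∂μ[|B] + (1 - w) * ∫ x, h x ∂μ[|C] - ∫ x, h x ∂μ[|A]) := by
  have hA_pos : 0 < μ.real A := ENNReal.toReal_pos hA₀ (measure_ne_top μ A)
  have hB_pos : 0 < μ.real B := ENNReal.toReal_pos hB₀ (measure_ne_top μ B)
  have hC_pos : 0 < μ.real C := ENNReal.toReal_pos hC₀ (measure_ne_top μ C)
  obtain ⟨s, hs, hsA, hsB, hsC⟩ : ∃ s > 0, s ≤ μ.real A ∧ s ≤ μ.real B ∧ s ≤ μ.real C :=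
    ⟨min (μ.real A) (min (μ.real B) (μ.real C)), by positivity, by simp, by simp, by simp⟩
  have hmass {t u : ℝ} (ht : t ∈ Icc (0 : ℝ) 1) (hsu : s ≤ u) : s * t / u ∈ Icc (0 : ℝ) 1 :=
    have hu : 0 < u := hs.trans_le hsu
    ⟨div_nonneg (mul_nonneg hs.le ht.1) hu.le,
      (div_le_one hu).2 <| (mul_le_of_le_one_right hs.le ht.2).trans hsu⟩
  refine ⟨s, hs, _, hφ.reallocate hA hB hC hφA hφB hφC hBC (hmass ⟨zero_le_one, le_rfl⟩ hsA)
    (hmass hw hsB) (hmass ⟨sub_nonneg.2 hw.2, sub_le_self 1 hw.1⟩ hsC), fun h hh => ?_⟩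
  rw [hφ.integral_reallocate_mul hA hB hC hh]
  field_simp
  ring

theorem IsTest.exists_integral_mul_comp_lt (hφ : IsTest φ) (μ : Measure Ω) [IsFiniteMeasure μ]
    {T : Ω → ℝ} (hT : Measurable T) (hTi : Integrable T μ) {c d : ℝ}
    (hA₀ : μ {x | φ x = 1 ∧ T x ∈ Ioo c d} ≠ 0) (hB₀ : μ {x | φ x = 0 ∧ T x < c} ≠ 0)
    (hC₀ : μ {x | φ x = 0 ∧ d < T x} ≠ 0) :
    ∃ ψ, IsTest ψ ∧ ∫ x, ψ x ∂μ = ∫ x, φ x ∂μ ∧ ∀ f : ℝ → ℝ, StrictConvexOn ℝ univ f →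
      Integrable (fun x => f (T x)) μ →
      ∫ x, φ x * f (T x) ∂μ < ∫ x, ψ x * f (T x) ∂μ := by
  set A := {x | φ x = 1 ∧ T x ∈ Ioo c d}
  set B := {x | φ x = 0 ∧ T x < c}
  set C := {x | φ x = 0 ∧ d < T x}
  have hφm := hφ.measurable
  have hA : MeasurableSet A := (hφm (measurableSet_singleton 1)).inter (hT measurableSet_Ioo)
  have hB : MeasurableSet B := (hφm (measurableSet_singleton 0)).inter (hT measurableSet_Iio)
  have hC : MeasurableSet C := (hφm (measurableSet_singleton 0)).inter (hT measurableSet_Ioi)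
  have hcd : c < d := by
    obtain ⟨x, -, hx⟩ := nonempty_of_measure_ne_zero hA₀
    exact hx.1.trans hx.2
  have hBC : Disjoint B C := disjoint_left.2 fun x hxB hxC => by
    linarith [hxB.2, hxC.2]
  have := cond_isProbabilityMeasure hA₀
  have := cond_isProbabilityMeasure hB₀
  have := cond_isProbabilityMeasure hC₀
  have hm : ∫ x, T x ∂μ[|B] < c := by
    simpa using integral_lt_integral_of_ae_lt (integrable_cond hTi) (integrable_const c)
      ((ae_cond_mem hB).mono fun x hx => hx.2)
  have hM : d < ∫ x, T x ∂μ[|C] := by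
    simpa using integral_lt_integral_of_ae_lt (integrable_const d) (integrable_cond hTi)
      ((ae_cond_mem hC).mono fun x hx => hx.2)
  obtain ⟨w, hw, hw_lt⟩ := exists_weight_integral_comp_lt μ[|A] μ[|B] μ[|C]
    (integrable_cond hTi) (integrable_cond hTi) (integrable_cond hTi)
    ((ae_cond_mem hA).mono fun x hx => ⟨hm.trans hx.2.1, hx.2.2.trans hM⟩)
  obtain ⟨s, hs, ψ, hψ, hψ_eq⟩ := hφ.exists_integral_mul_eq μ hA hB hC (fun x hx => hx.1)
    (fun x hx => hx.1) (fun x hx => hx.1) hBC hA₀ hB₀ hC₀ hw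
  refine ⟨ψ, hψ, by simpa using hψ_eq 1 (integrable_const 1), fun f hf hfi => ?_⟩
  rw [hψ_eq _ hfi]
  exact lt_add_of_pos_right _ <| mul_pos hs <| sub_pos.2 <|
    hw_lt f hf (integrable_cond hfi) (integrable_cond hfi) (integrable_cond hfi)

end Test

section Regular

variable {Ω : Type*} [MeasurableSpace Ω] {φ ψ : Ω → ℝ}

/-- The regular tests of level `α` for the null hypothesis `θ = 0` in the model `P`, that is the
class `Φ₀(α)`: the probability `1 - ∫ x, φ x ∂P θ` of a type II error is continuous in `θ` and
vanishes at infinity. -/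
structure IsRegularTest (P : ℝ → Measure Ω) (α : ℝ) (φ : Ω → ℝ) : Prop extends IsTest φ where
  level : ∫ x, φ x ∂P 0 = α
  continuous : Continuous fun θ => 1 - ∫ x, φ x ∂P θ
  tendsto_zero : Tendsto (fun θ => 1 - ∫ x, φ x ∂P θ) (cocompact ℝ) (𝓝 0)

theorem IsTest.integral_le_one (hφ : IsTest φ) (μ : Measure Ω) [IsProbabilityMeasure μ] :
    ∫ x, φ x ∂μ ≤ 1 := by
  simpa using integral_mono_of_nonneg (μ := μ) (ae_of_all _ fun x => (hφ.mem_Icc x).1)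
    (integrable_const 1) (ae_of_all _ fun x => (hφ.mem_Icc x).2)

theorem isRegularTest_iff {P : ℝ → Measure Ω} [∀ θ, IsProbabilityMeasure (P θ)] {α : ℝ} :
    IsRegularTest P α φ ↔ Measurable φ ∧ (∀ x, φ x ∈ Icc (0 : ℝ) 1) ∧ ∫ x, φ x ∂P 0 = α ∧
      (Continuous fun θ => 1 - ∫ x, φ x ∂P θ) ∧
      ∀ ε > 0, ∃ K, IsCompact K ∧ {θ | ε ≤ 1 - ∫ x, φ x ∂P θ} ⊆ K := by
  have hiff (hφ : IsTest φ) := tendsto_cocompact_zero_iff_of_nonneg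
    fun θ => sub_nonneg.2 (hφ.integral_le_one (P θ))
  constructor
  · rintro ⟨hφ, hlevel, hcont, hlim⟩
    exact ⟨hφ.measurable, hφ.mem_Icc, hlevel, hcont, (hiff hφ).1 hlim⟩
  · rintro ⟨hmeas, hIcc, hlevel, hcont, hlim⟩
    exact ⟨⟨hmeas, hIcc⟩, hlevel, hcont, (hiff ⟨hmeas, hIcc⟩).2 hlim⟩

theorem IsRegularTest.of_integral_le {P : ℝ → Measure Ω} [∀ θ, IsProbabilityMeasure (P θ)] {α : ℝ}
    (hφ : IsRegularTest P α φ) (hψ : IsTest ψ) (hlevel : ∫ x, ψ x ∂P 0 = α)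
    (hcont : Continuous fun θ => ∫ x, ψ x ∂P θ) (hle : ∀ θ, ∫ x, φ x ∂P θ ≤ ∫ x, ψ x ∂P θ) :
    IsRegularTest P α ψ where
  toIsTest := hψ
  level := hlevel
  continuous := continuous_const.sub hcont
  tendsto_zero := squeeze_zero (fun θ => sub_nonneg.2 (hψ.integral_le_one (P θ)))
    (fun θ => sub_le_sub_left (hle θ) 1) hφ.tendsto_zero

end Regular

section ExponentialFamily

variable {Ω : Type*} [MeasurableSpace Ω] {φ : Ω → ℝ} {μ : Measure Ω} {T : Ω → ℝ}

theorem integral_tilted_mul_eq_div_mgf (φ : Ω → ℝ) (θ : ℝ) :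
    ∫ x, φ x ∂μ.tilted (θ * T ·) = (∫ x, φ x * Real.exp (θ * T x) ∂μ) / mgf T μ θ := by
  rw [integral_tilted_mul_eq_mgf, ← integral_div]
  refine integral_congr_ae (ae_of_all _ fun x => ?_)
  simp only [smul_eq_mul]
  ring

-- The numerator of the power is the moment generating function of `T` under `φ • μ`, which is
-- smooth wherever it is finite.
theorem IsTest.continuous_integral_tilted (hφ : IsTest φ) [IsProbabilityMeasure μ]
    (hexp : ∀ θ, Integrable (fun x => Real.exp (θ * T x)) μ) :
    Continuous fun θ => ∫ x, φ x ∂μ.tilted (θ * T ·) := by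
  have hnum (θ : ℝ) : ∫ x, φ x * Real.exp (θ * T x) ∂μ =
      mgf T (μ.withDensity fun x => ENNReal.ofReal (φ x)) θ := by
    rw [mgf, integral_withDensity_eq_integral_toReal_smul hφ.measurable.ennreal_ofReal (by simp)]
    simp only [ENNReal.toReal_ofReal (hφ.mem_Icc _).1, smul_eq_mul]
  have hle : μ.withDensity (fun x => ENNReal.ofReal (φ x)) ≤ μ := by
    conv_rhs => rw [← withDensity_one (μ := μ)]
    exact withDensity_mono (ae_of_all _ fun x => ENNReal.ofReal_le_one.2 (hφ.mem_Icc x).2)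
  simp only [integral_tilted_mul_eq_div_mgf, hnum]
  exact (continuous_mgf fun θ => (hexp θ).mono_measure hle).div (continuous_mgf hexp)
    fun θ => (mgf_pos (hexp θ)).ne'

theorem IsTest.exists_integral_tilted_lt (hφ : IsTest φ) [IsProbabilityMeasure μ]
    (hT : Measurable T) (hexp : ∀ θ, Integrable (fun x => Real.exp (θ * T x)) μ) {c d : ℝ}
    (hA₀ : μ {x | φ x = 1 ∧ T x ∈ Ioo c d} ≠ 0) (hB₀ : μ {x | φ x = 0 ∧ T x < c} ≠ 0)
    (hC₀ : μ {x | φ x = 0 ∧ d < T x} ≠ 0) :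
    ∃ ψ, IsTest ψ ∧ ∫ x, ψ x ∂μ = ∫ x, φ x ∂μ ∧
      ∀ θ ≠ 0, ∫ x, φ x ∂μ.tilted (θ * T ·) < ∫ x, ψ x ∂μ.tilted (θ * T ·) := by
  have hTi : Integrable T μ := integrable_of_mem_interior_integrableExpSet <| by
    simp [integrableExpSet, hexp]
  obtain ⟨ψ, hψ, hψ_eq, hψ_lt⟩ := hφ.exists_integral_mul_comp_lt μ hT hTi hA₀ hB₀ hC₀
  refine ⟨ψ, hψ, hψ_eq, fun θ hθ => ?_⟩
  simp only [integral_tilted_mul_eq_div_mgf]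
  exact div_lt_div_of_pos_right (hψ_lt _ (strictConvexOn_exp_mul hθ) (hexp θ)) (mgf_pos (hexp θ))

theorem IsRegularTest.exists_isRegularTest_integral_lt {P : ℝ → Measure Ω} {α : ℝ}
    (hφ : IsRegularTest P α φ) [IsProbabilityMeasure μ] (hP : ∀ θ, P θ = μ.tilted (θ * T ·))
    (hT : Measurable T) (hexp : ∀ θ, Integrable (fun x => Real.exp (θ * T x)) μ) {c d : ℝ}
    (hA₀ : μ {x | φ x = 1 ∧ T x ∈ Ioo c d} ≠ 0) (hB₀ : μ {x | φ x = 0 ∧ T x < c} ≠ 0)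
    (hC₀ : μ {x | φ x = 0 ∧ d < T x} ≠ 0) :
    ∃ ψ, IsRegularTest P α ψ ∧ ∀ θ ≠ 0, ∫ x, φ x ∂P θ < ∫ x, ψ x ∂P θ := by
  obtain rfl : P = fun θ => μ.tilted (θ * T ·) := funext hP
  have (θ : ℝ) : IsProbabilityMeasure (μ.tilted (θ * T ·)) := isProbabilityMeasure_tilted (hexp θ)
  obtain ⟨ψ, hψ, hψ_eq, hψ_lt⟩ := hφ.exists_integral_tilted_lt hT hexp hA₀ hB₀ hC₀
  have hlevel : ∫ x, ψ x ∂μ.tilted (0 * T ·) = ∫ x, φ x ∂μ.tilted (0 * T ·) := by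
    simpa using hψ_eq
  refine ⟨ψ, hφ.of_integral_le hψ (hlevel.trans hφ.level) (hψ.continuous_integral_tilted hexp)
    fun θ => ?_, hψ_lt⟩
  rcases eq_or_ne θ 0 with rfl | hθ
  · exact hlevel.ge
  · exact (hψ_lt θ hθ).le

end ExponentialFamily

section Gaussian

theorem gaussianReal_tilted (m : ℝ) {v : NNReal} (hv : v ≠ 0) (t : ℝ) :
    (gaussianReal m v).tilted (t * ·) = gaussianReal (m + v * t) v := by
  have hexp : ∫ x, Real.exp (t * x) ∂gaussianReal m v = Real.exp (m * t + v * t ^ 2 / 2) :=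
    congrFun mgf_fun_id_gaussianReal t
  rw [Measure.tilted, hexp, gaussianReal_of_var_ne_zero _ hv, gaussianReal_of_var_ne_zero _ hv,
    ← withDensity_mul _ (measurable_gaussianPDF _ _) (by fun_prop)]
  congr with x
  have hv' : (v : ℝ) ≠ 0 := NNReal.coe_ne_zero.2 hv
  rw [Pi.mul_apply, gaussianPDF, gaussianPDF, ← ENNReal.ofReal_mul (gaussianPDFReal_nonneg m v x)]
  simp only [gaussianPDFReal, mul_assoc, ← Real.exp_sub, ← Real.exp_add]
  congr 3
  field_simp
  ring

theorem isOpenPosMeasure_gaussianReal (m : ℝ) {v : NNReal} (hv : v ≠ 0) :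
    (gaussianReal m v).IsOpenPosMeasure :=
  (gaussianReal_absolutelyContinuous' m hv).isOpenPosMeasure

variable (v₁ v₂ : NNReal)

/-- The law of `(U₁ + θ, U₂ + θ)`, where `U₁` and `U₂` are independent centered Gaussian variables
with variances `v₁` and `v₂`. -/
noncomputable def gaussianModel (θ : ℝ) : Measure (ℝ × ℝ) :=
  (gaussianReal θ v₁).prod (gaussianReal θ v₂)

/-- The sufficient statistic of the exponential family `gaussianModel v₁ v₂`. -/
noncomputable def gaussianStatistic (x : ℝ × ℝ) : ℝ :=
  x.1 / v₁ + x.2 / v₂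

instance (θ : ℝ) : IsProbabilityMeasure (gaussianModel v₁ v₂ θ) := by
  unfold gaussianModel; infer_instance

theorem continuous_gaussianStatistic : Continuous (gaussianStatistic v₁ v₂) := by
  unfold gaussianStatistic
  fun_prop

theorem integrable_exp_mul_gaussianStatistic (m θ : ℝ) :
    Integrable (fun x => Real.exp (θ * gaussianStatistic v₁ v₂ x)) (gaussianModel v₁ v₂ m) := by
  refine ((integrable_exp_mul_gaussianReal (θ / v₁)).mul_prod
    (integrable_exp_mul_gaussianReal (θ / v₂))).congr (ae_of_all _ fun x => ?_)
  simp only [gaussianStatistic, ← Real.exp_add]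
  congr 1
  ring

theorem gaussianModel_eq_map_add (θ : ℝ) :
    gaussianModel v₁ v₂ θ = (gaussianModel v₁ v₂ 0).map (· + (θ, θ)) := by
  unfold gaussianModel
  nth_rewrite 1 2 [← zero_add θ]
  rw [← gaussianReal_map_add_const θ, ← gaussianReal_map_add_const θ,
    Measure.map_prod_map _ _ (by fun_prop) (by fun_prop)]
  rfl

variable {v₁ v₂}

theorem withDensity_gaussianPDFReal_sub_eq_gaussianModel (hv₁ : v₁ ≠ 0) (hv₂ : v₂ ≠ 0) (θ : ℝ) :
    (volume : Measure (ℝ × ℝ)).withDensity (fun x => ENNReal.ofReal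
      (gaussianPDFReal 0 v₁ (x.1 - θ) * gaussianPDFReal 0 v₂ (x.2 - θ))) =
      gaussianModel v₁ v₂ θ := by
  rw [gaussianModel, gaussianReal_of_var_ne_zero _ hv₁, gaussianReal_of_var_ne_zero _ hv₂,
    prod_withDensity (measurable_gaussianPDF _ _) (measurable_gaussianPDF _ _)]
  simp only [gaussianPDFReal_sub, zero_add, gaussianPDF,
    ENNReal.ofReal_mul (gaussianPDFReal_nonneg _ _ _), Measure.volume_eq_prod]

theorem gaussianModel_eq_tilted (hv₁ : v₁ ≠ 0) (hv₂ : v₂ ≠ 0) (θ : ℝ) :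
    gaussianModel v₁ v₂ θ = (gaussianModel v₁ v₂ 0).tilted (θ * gaussianStatistic v₁ v₂ ·) := by
  have hshift {v : NNReal} (hv : v ≠ 0) :
      gaussianReal θ v = (gaussianReal 0 v).tilted (θ / v * ·) := by
    rw [gaussianReal_tilted 0 hv, zero_add, mul_div_cancel₀ _ (NNReal.coe_ne_zero.2 hv)]
  rw [gaussianModel, hshift hv₁, hshift hv₂, tilted_prod_tilted _ _ (by fun_prop) (by fun_prop)]
  congr with x
  rw [gaussianStatistic]
  ring

theorem gaussianStatistic_add_mul (hv₁ : v₁ ≠ 0) (hv₂ : v₂ ≠ 0) (x y s t : ℝ) :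
    gaussianStatistic v₁ v₂ (x + s * v₁, y + t * v₂) =
      gaussianStatistic v₁ v₂ (x, y) + (s + t) := by
  have hv₁' : (v₁ : ℝ) ≠ 0 := NNReal.coe_ne_zero.2 hv₁
  have hv₂' : (v₂ : ℝ) ≠ 0 := NNReal.coe_ne_zero.2 hv₂
  simp only [gaussianStatistic, add_div, mul_div_cancel_right₀ _ hv₁', mul_div_cancel_right₀ _ hv₂']
  ring

theorem isOpenPosMeasure_gaussianModel (hv₁ : v₁ ≠ 0) (hv₂ : v₂ ≠ 0) (θ : ℝ) :
    (gaussianModel v₁ v₂ θ).IsOpenPosMeasure := by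
  have := isOpenPosMeasure_gaussianReal θ hv₁
  have := isOpenPosMeasure_gaussianReal θ hv₂
  unfold gaussianModel
  infer_instance

end Gaussian

section Moran

variable {α a b₁ b₂ : ℝ} {v₁ v₂ : NNReal}

/-- Moran's test: reject if `x.1 > a` and `x.2 > b₁`, or if `x.1 < a` and `x.2 < b₂`. -/
noncomputable def moranTest (a b₁ b₂ : ℝ) : ℝ × ℝ → ℝ :=
  ((Ioi a ×ˢ Ioi b₁) ∪ (Iio a ×ˢ Iio b₂)).indicator fun _ => 1

theorem isTest_moranTest (a b₁ b₂ : ℝ) : IsTest (moranTest a b₁ b₂) :=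
  isTest_indicator_one <|
    (measurableSet_Ioi.prod measurableSet_Ioi).union (measurableSet_Iio.prod measurableSet_Iio)

theorem moranTest_eq_one_of_gt {x : ℝ × ℝ} (h₁ : a < x.1) (h₂ : b₁ < x.2) :
    moranTest a b₁ b₂ x = 1 :=
  indicator_of_mem (mem_union_left _ (mem_prod.2 ⟨h₁, h₂⟩)) _

theorem moranTest_eq_one_of_lt {x : ℝ × ℝ} (h₁ : x.1 < a) (h₂ : x.2 < b₂) :
    moranTest a b₁ b₂ x = 1 :=
  indicator_of_mem (mem_union_right _ (mem_prod.2 ⟨h₁, h₂⟩)) _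

theorem moranTest_eq_zero {x : ℝ × ℝ} (h₁ : a < x.1) (h₂ : x.2 < b₁) : moranTest a b₁ b₂ x = 0 :=
  indicator_of_notMem (by rintro (⟨-, h⟩ | ⟨h, -⟩); exacts [h.not_gt h₂, h.not_gt h₁]) _

theorem eventually_moranTest_eq_one {x : ℝ × ℝ} (h₁ : a < x.1) (h₂ : b₁ < x.2) :
    ∀ᶠ y in 𝓝 x, moranTest a b₁ b₂ y = 1 := by
  filter_upwards [continuous_fst.continuousAt.eventually_const_lt h₁,
    continuous_snd.continuousAt.eventually_const_lt h₂] with y hy₁ hy₂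
  exact moranTest_eq_one_of_gt hy₁ hy₂

theorem eventually_moranTest_eq_zero {x : ℝ × ℝ} (h₁ : a < x.1) (h₂ : x.2 < b₁) :
    ∀ᶠ y in 𝓝 x, moranTest a b₁ b₂ y = 0 := by
  filter_upwards [continuous_fst.continuousAt.eventually_const_lt h₁,
    continuous_snd.continuousAt.eventually_lt_const h₂] with y hy₁ hy₂
  exact moranTest_eq_zero hy₁ hy₂

theorem integral_moranTest_prod (a : ℝ) (μ ν : Measure ℝ) [IsProbabilityMeasure μ]
    [NullSingletonClass μ] [IsFiniteMeasure ν] (hb₁ : ν.real (Ioi b₁) = α)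
    (hb₂ : ν.real (Iio b₂) = α) :
    ∫ x, moranTest a b₁ b₂ x ∂μ.prod ν = α := by
  have hdisj : Disjoint (Ioi a ×ˢ Ioi b₁) (Iio a ×ˢ Iio b₂) :=
    disjoint_left.2 fun x hx hx' => lt_asymm (mem_Ioi.1 hx.1) (mem_Iio.1 hx'.1)
  have hμ : μ.real (Ioi a) + μ.real (Iio a) = 1 := by
    rw [measureReal_congr Iio_ae_eq_Iic, ← compl_Iic, probReal_compl_eq_one_sub measurableSet_Iic,
      sub_add_cancel]
  unfold moranTest
  rw [integral_indicator_const _ ((measurableSet_Ioi.prod measurableSet_Ioi).union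
      (measurableSet_Iio.prod measurableSet_Iio)), smul_eq_mul, mul_one,
    measureReal_union hdisj (measurableSet_Iio.prod measurableSet_Iio), measureReal_prod_prod,
    measureReal_prod_prod, hb₁, hb₂, ← add_mul, hμ, one_mul]

theorem tendsto_moranTest_add_cocompact (a b₁ b₂ : ℝ) (x : ℝ × ℝ) :
    Tendsto (fun θ : ℝ => moranTest a b₁ b₂ (x + (θ, θ))) (cocompact ℝ) (𝓝 1) := by
  refine tendsto_const_nhds.congr' ?_
  rw [cocompact_eq_atBot_atTop]
  refine eventually_sup.2 ⟨?_, ?_⟩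
  · filter_upwards [eventually_lt_atBot (a - x.1), eventually_lt_atBot (b₂ - x.2)] with θ h₁ h₂
    exact (moranTest_eq_one_of_lt (lt_sub_iff_add_lt'.1 h₁) (lt_sub_iff_add_lt'.1 h₂)).symm
  · filter_upwards [eventually_gt_atTop (a - x.1), eventually_gt_atTop (b₁ - x.2)] with θ h₁ h₂
    exact (moranTest_eq_one_of_gt (sub_lt_iff_lt_add'.1 h₁) (sub_lt_iff_lt_add'.1 h₂)).symm

theorem tendsto_integral_moranTest_cocompact (v₁ v₂ : NNReal) (a b₁ b₂ : ℝ) :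
    Tendsto (fun θ => ∫ x, moranTest a b₁ b₂ x ∂gaussianModel v₁ v₂ θ) (cocompact ℝ) (𝓝 1) := by
  have hφ := isTest_moranTest a b₁ b₂
  have hshift (θ : ℝ) : ∫ x, moranTest a b₁ b₂ x ∂gaussianModel v₁ v₂ θ =
      ∫ x, moranTest a b₁ b₂ (x + (θ, θ)) ∂gaussianModel v₁ v₂ 0 := by
    rw [gaussianModel_eq_map_add,
      integral_map (by fun_prop) hφ.measurable.aestronglyMeasurable]
  have : (cocompact ℝ).IsCountablyGenerated := by
    rw [cocompact_eq_atBot_atTop]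
    infer_instance
  have hlim := tendsto_integral_filter_of_dominated_convergence (fun _ => 1)
    (.of_forall fun θ : ℝ =>
      (hφ.measurable.comp (measurable_add_const (θ, θ))).aestronglyMeasurable)
    (.of_forall fun θ => ae_of_all _ fun x => by
      rw [Function.comp_apply, Real.norm_of_nonneg (hφ.mem_Icc _).1]
      exact (hφ.mem_Icc _).2)
    (integrable_const 1)
    (ae_of_all (gaussianModel v₁ v₂ 0) fun x => tendsto_moranTest_add_cocompact a b₁ b₂ x)
  simpa [hshift] using hlim

theorem isRegularTest_moranTest (hv₁ : v₁ ≠ 0) (hv₂ : v₂ ≠ 0) (a : ℝ)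
    (hb₁ : (gaussianReal 0 v₂).real (Iic b₁) = 1 - α)
    (hb₂ : (gaussianReal 0 v₂).real (Iic b₂) = α) :
    IsRegularTest (gaussianModel v₁ v₂) α (moranTest a b₁ b₂) where
  toIsTest := isTest_moranTest a b₁ b₂
  level := by
    have := nullSingletonClass_gaussianReal (μ := 0) hv₁
    have := nullSingletonClass_gaussianReal (μ := 0) hv₂
    refine integral_moranTest_prod a _ _ ?_ ((measureReal_congr Iio_ae_eq_Iic).trans hb₂)
    rw [← compl_Iic, probReal_compl_eq_one_sub measurableSet_Iic, hb₁, sub_sub_cancel]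
  continuous := by
    refine continuous_const.sub <| ((isTest_moranTest a b₁ b₂).continuous_integral_tilted
      (integrable_exp_mul_gaussianStatistic v₁ v₂ 0)).congr fun θ => ?_
    rw [← gaussianModel_eq_tilted hv₁ hv₂ θ]
  tendsto_zero := by
    rw [← sub_self (1 : ℝ)]
    exact (tendsto_integral_moranTest_cocompact v₁ v₂ a b₁ b₂).const_sub 1

theorem exists_isRegularTest_moranTest_lt (hv₁ : v₁ ≠ 0) (hv₂ : v₂ ≠ 0)
    (hφ : IsRegularTest (gaussianModel v₁ v₂) α (moranTest a b₁ b₂)) :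
    ∃ ψ, IsRegularTest (gaussianModel v₁ v₂) α ψ ∧ ∀ θ ≠ 0,
      ∫ x, moranTest a b₁ b₂ x ∂gaussianModel v₁ v₂ θ < ∫ x, ψ x ∂gaussianModel v₁ v₂ θ := by
  set T := gaussianStatistic v₁ v₂
  have hT : Continuous T := continuous_gaussianStatistic v₁ v₂
  have hT_add (s t : ℝ) : T (a + s * v₁, b₁ + t * v₂) = T (a, b₁) + (s + t) :=
    gaussianStatistic_add_mul hv₁ hv₂ a b₁ s t
  have := isOpenPosMeasure_gaussianModel hv₁ hv₂ 0
  have hv₁_pos : (0 : ℝ) < v₁ := NNReal.coe_pos.2 hv₁.pos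
  have hv₂_pos : (0 : ℝ) < v₂ := NNReal.coe_pos.2 hv₂.pos
  refine hφ.exists_isRegularTest_integral_lt (c := T (a, b₁)) (d := T (a, b₁) + 3)
    (gaussianModel_eq_tilted hv₁ hv₂) hT.measurable
    (integrable_exp_mul_gaussianStatistic v₁ v₂ 0) ?_ ?_ ?_
  · exact (Measure.measure_pos_of_mem_nhds _ (x := (a + 1 * v₁, b₁ + 1 * v₂)) <|
      (eventually_moranTest_eq_one (by simpa) (by simpa)).and <|
        hT.continuousAt.eventually_mem <| Ioo_mem_nhds
          (by rw [hT_add]; linarith) (by rw [hT_add]; linarith)).ne'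
  · exact (Measure.measure_pos_of_mem_nhds _ (x := (a + 1 * v₁, b₁ + -2 * v₂)) <|
      (eventually_moranTest_eq_zero (by simpa) (by simpa)).and <|
        hT.continuousAt.eventually_lt_const (by rw [hT_add]; linarith)).ne'
  · exact (Measure.measure_pos_of_mem_nhds _ (x := (a + 5 * v₁, b₁ + -1 * v₂)) <|
      (eventually_moranTest_eq_zero (by simpa) (by simpa)).and <|
        hT.continuousAt.eventually_const_lt (by rw [hT_add]; linarith)).ne'

end Moran

/- STATEMENT 14: In the one-dimensional Gaussian case (U₁ ~ N(0,σ₁²), U₂ ~ N(0,σ₂²)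
independent), Moran's test φ is a regular test of level α that is inadmissible among
regular tests: φ ∈ Φ₀(α) \ A₀(α). -/
theorem stmt_14
    (v₁ v₂ : NNReal) (hv₁ : 0 < v₁) (hv₂ : 0 < v₂)
    -- P θ is the law of (U₁ + θ, U₂ + θ)
    (P : ℝ → Measure (ℝ × ℝ))
    (hP : P = fun θ => (volume : Measure (ℝ × ℝ)).withDensity
      (fun x => ENNReal.ofReal
        (gaussianPDFReal 0 v₁ (x.1 - θ) * gaussianPDFReal 0 v₂ (x.2 - θ))))
    (α : ℝ) (hα : α ∈ Set.Ioo (0 : ℝ) 1)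
    -- b₁ and b₂ are the (1−α)-quantile and α-quantile of N(0, σ₂²)
    (b₁ b₂ : ℝ)
    (hb₁ : b₁ = sInf {t : ℝ | 1 - α ≤ (gaussianReal 0 v₂ (Set.Iic t)).toReal})
    (hb₂ : b₂ = sInf {t : ℝ | α ≤ (gaussianReal 0 v₂ (Set.Iic t)).toReal})
    (a : ℝ)
    -- power of an arbitrary test and Moran's test φ
    (β : (ℝ × ℝ → ℝ) → ℝ → ℝ) (hβ : β = fun φ' θ => ∫ x, φ' x ∂(P θ))
    (φ : ℝ × ℝ → ℝ)
    (hφ : φ = Set.indicator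
      ((Set.Ioi a ×ˢ Set.Ioi b₁) ∪ (Set.Iio a ×ˢ Set.Iio b₂)) (fun _ => (1 : ℝ)))
    -- the class Φ₀(α) of regular tests of level α
    (Φ₀ : Set (ℝ × ℝ → ℝ))
    (hΦ₀ : Φ₀ = {φ' : ℝ × ℝ → ℝ | Measurable φ' ∧ (∀ x, φ' x ∈ Set.Icc (0 : ℝ) 1) ∧
      β φ' 0 = α ∧ Continuous (fun θ : ℝ => 1 - β φ' θ) ∧
      ∀ ε : ℝ, 0 < ε → ∃ K : Set ℝ, IsCompact K ∧ {θ : ℝ | ε ≤ 1 - β φ' θ} ⊆ K}) :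
    -- conclusion: φ ∈ Φ₀(α) \ A₀(α)
    φ ∈ Φ₀ ∧ ∃ φ' ∈ Φ₀,
      (∀ θ : ℝ, θ ≠ 0 → β φ θ ≤ β φ' θ) ∧
      (∃ θ : ℝ, θ ≠ 0 ∧ β φ θ < β φ' θ) := by
  have hv₁' : v₁ ≠ 0 := hv₁.ne'
  have hv₂' : v₂ ≠ 0 := hv₂.ne'
  have hP_eq : P = gaussianModel v₁ v₂ := by
    rw [hP]
    exact funext (withDensity_gaussianPDFReal_sub_eq_gaussianModel hv₁' hv₂')
  have hφ_eq : φ = moranTest a b₁ b₂ := hφ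
  have := nullSingletonClass_gaussianReal (μ := 0) hv₂'
  have hmem (f : ℝ × ℝ → ℝ) : f ∈ Φ₀ ↔ IsRegularTest (gaussianModel v₁ v₂) α f := by
    rw [hΦ₀, hβ, hP_eq, isRegularTest_iff]
    rfl
  have hreg : IsRegularTest (gaussianModel v₁ v₂) α φ := by
    rw [hφ_eq]
    exact isRegularTest_moranTest hv₁' hv₂' a
      (hb₁ ▸ measureReal_Iic_sInf_setOf_le_eq _ ⟨sub_pos.2 hα.2, sub_lt_self 1 hα.1⟩)
      (hb₂ ▸ measureReal_Iic_sInf_setOf_le_eq _ hα)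
  obtain ⟨ψ, hψ, hlt⟩ := exists_isRegularTest_moranTest_lt hv₁' hv₂' (hφ_eq ▸ hreg)
  simp only [hmem, hβ, hP_eq, hφ_eq]
  exact ⟨hφ_eq ▸ hreg, ψ, hψ, fun θ hθ => (hlt θ hθ).le, 1, one_ne_zero, hlt 1 one_ne_zero⟩
end

section
/- Moran's multi-dimensional Gaussian test φ is a regular test of level α: β_φ(0) = α, the map θ ↦ β_φ(θ) is continuous on ℝ^d, and β_φ(θ) → 1 as ‖θ‖ → ∞; that is, φ ∈ Φ₀(α). -/
open MeasureTheory ProbabilityTheory Filter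
open scoped RealInnerProductSpace

/-!
The law `P θ` is the translate by `(θ, θ)` of the product of two standard Gaussians `γ`.

* Level: given `x ≠ 0`, the statistic `⟪x, y⟫ / ‖x‖` is the coordinate of `y ∼ γ` along a unit
  vector, so it is a standard one-dimensional Gaussian whatever `x` is.
* Continuity: translation is continuous in `L¹`, so every test, Moran's or not, has a continuous
  power function.
* Limit: `⟪x, y⟫ ≥ ‖x‖ (‖x‖ - ‖y - x‖)`, and a translation along the diagonal leaves `y - x`
  unchanged while `‖x‖` tends to infinity. So each fixed sample ends up in the rejection zone, and
  dominated convergence concludes.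
-/

section Translation

lemma map_add_left_withDensity {G : Type*} [AddGroup G] [MeasurableSpace G] [MeasurableAdd G]
    {μ : Measure G} [μ.IsAddLeftInvariant] (f : G → ENNReal) (c : G) :
    (μ.withDensity f).map (c + ·) = μ.withDensity fun x => f (-c + x) := by
  ext s hs
  rw [Measure.map_apply (measurable_const_add c) hs, withDensity_apply _ hs,
    withDensity_apply _ (measurable_const_add c hs)]
  simpa using (measurePreserving_add_left μ c).setLIntegral_comp_preimage_emb
    (measurableEmbedding_addLeft c) (fun x => f (-c + x)) s

variable {G : Type*} [TopologicalSpace G] [AddGroup G] [IsTopologicalAddGroup G]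
  [MeasurableSpace G] [BorelSpace G] {μ : Measure G} [μ.IsAddLeftInvariant]
  [IsLocallyFiniteMeasure μ] [μ.InnerRegularCompactLTTop]

lemma continuous_setIntegral_comp_neg_add {F : Type*} [NormedAddCommGroup F] [NormedSpace ℝ F]
    {f : G → F} (hf : Integrable f μ) (s : Set G) :
    Continuous fun c => ∫ x in s, f (-c + x) ∂μ := by
  have hf1 : MemLp f 1 μ := memLp_one_iff_integrable.2 hf
  have : Fact ((1 : ENNReal) ≠ ⊤) := ⟨ENNReal.one_ne_top⟩
  have htranslate : Continuous fun c : G => DomAddAct.mk (-c) +ᵥ hf1.toLp f :=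
    (DomAddAct.continuous_mk.comp continuous_neg).vadd continuous_const
  refine ((continuous_setIntegral s).comp htranslate).congr fun c =>
    integral_congr_ae (ae_restrict_of_ae ?_)
  exact (hf1.comp_measurePreserving (measurePreserving_vadd (-c) μ)).coeFn_toLp

lemma continuous_measureReal_map_add_left [SigmaFinite μ] {ν : Measure G}
    [IsFiniteMeasure ν] (hν : ν ≪ μ) {s : Set G} (hs : MeasurableSet s) :
    Continuous fun c => (ν.map (c + ·)).real s := by
  have hdensity : Integrable (fun x => (ν.rnDeriv μ x).toReal) μ :=
    Measure.integrable_toReal_rnDeriv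
  refine (continuous_setIntegral_comp_neg_add hdensity s).congr fun c => ?_
  rw [map_measureReal_apply (measurable_const_add c) hs, ← Measure.setIntegral_toReal_rnDeriv hν,
    ← (measurePreserving_add_left μ c).setIntegral_preimage_emb (measurableEmbedding_addLeft c)]
  simp only [neg_add_cancel_left]

end Translation

instance isAddHaarMeasure_volume_prod {G H : Type*} [AddGroup G] [TopologicalSpace G]
    [MeasureSpace G] [AddGroup H] [TopologicalSpace H] [MeasureSpace H]
    [(volume : Measure G).IsAddHaarMeasure] [(volume : Measure H).IsAddHaarMeasure]
    [SFinite (volume : Measure G)] [SFinite (volume : Measure H)] [MeasurableAdd G]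
    [MeasurableAdd H] :
    (volume : Measure (G × H)).IsAddHaarMeasure :=
  Measure.prod.instIsAddHaarMeasure volume volume

section StdGaussian

variable {E : Type*} [NormedAddCommGroup E] [InnerProductSpace ℝ E]

/-- The Lebesgue density of the standard Gaussian measure on a finite-dimensional real inner
product space, as a real-valued function. -/
noncomputable def stdGaussianPDFReal (x : E) : ℝ :=
  (2 * Real.pi) ^ (-(Module.finrank ℝ E : ℝ) / 2) * Real.exp (-‖x‖ ^ 2 / 2)

lemma stdGaussianPDFReal_nonneg (x : E) : 0 ≤ stdGaussianPDFReal x := by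
  unfold stdGaussianPDFReal
  positivity

@[fun_prop]
lemma continuous_stdGaussianPDFReal : Continuous (stdGaussianPDFReal (E := E)) := by
  unfold stdGaussianPDFReal
  fun_prop

lemma stdGaussianPDFReal_mul_stdGaussianPDFReal (x y : E) :
    stdGaussianPDFReal x * stdGaussianPDFReal y =
      (2 * Real.pi) ^ (-(Module.finrank ℝ E : ℝ)) * Real.exp (-(‖x‖ ^ 2 + ‖y‖ ^ 2) / 2) := by
  simp only [stdGaussianPDFReal]
  rw [mul_mul_mul_comm, ← Real.rpow_add (by positivity), ← Real.exp_add]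
  ring_nf

variable [FiniteDimensional ℝ E] [MeasurableSpace E] [BorelSpace E]

lemma integral_stdGaussianPDFReal_mul_cexp_inner (t : E) :
    ∫ x, (stdGaussianPDFReal x : ℂ) * Complex.exp (⟪x, t⟫ * Complex.I) =
      Complex.exp (-‖t‖ ^ 2 / 2) := by
  have hfourier := GaussianFourier.integral_cexp_neg_mul_sq_norm_add (b := 1 / 2) (by norm_num)
    Complex.I t
  have hpi : (0 : ℝ) < 2 * Real.pi := by positivity
  have hconst : (Real.pi / (1 / 2) : ℂ) ^ (Module.finrank ℝ E / 2 : ℂ) =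
      (((2 * Real.pi) ^ ((Module.finrank ℝ E : ℝ) / 2) : ℝ) : ℂ) := by
    rw [Complex.ofReal_cpow hpi.le]
    push_cast
    ring_nf
  have hnormalization : (((2 * Real.pi) ^ (-(Module.finrank ℝ E : ℝ) / 2) : ℝ) : ℂ) *
      (Real.pi / (1 / 2)) ^ (Module.finrank ℝ E / 2 : ℂ) = 1 := by
    rw [hconst, ← Complex.ofReal_mul, ← Real.rpow_add hpi, neg_div, neg_add_cancel,
      Real.rpow_zero, Complex.ofReal_one]
  calc ∫ x, (stdGaussianPDFReal x : ℂ) * Complex.exp (⟪x, t⟫ * Complex.I)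
    _ = ∫ x : E, (((2 * Real.pi) ^ (-(Module.finrank ℝ E : ℝ) / 2) : ℝ) : ℂ) *
          Complex.exp (-(1 / 2) * ‖x‖ ^ 2 + Complex.I * ⟪t, x⟫) := by
      congr with x
      rw [stdGaussianPDFReal, real_inner_comm, Complex.exp_add]
      push_cast
      ring_nf
    _ = Complex.exp (Complex.I ^ 2 * ‖t‖ ^ 2 / (4 * (1 / 2))) := by
      rw [integral_const_mul, hfourier, ← mul_assoc, hnormalization, one_mul]
    _ = Complex.exp (-‖t‖ ^ 2 / 2) := by
      rw [Complex.I_sq]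
      ring_nf

lemma integrable_stdGaussianPDFReal : Integrable (stdGaussianPDFReal (E := E)) := by
  have hintegral : ∫ x : E, (stdGaussianPDFReal x : ℂ) = 1 := by
    simpa using integral_stdGaussianPDFReal_mul_cexp_inner (0 : E)
  exact integrable_of_integral_eq_one (by exact_mod_cast hintegral)

lemma stdGaussian_eq_withDensity :
    stdGaussian E = volume.withDensity fun x => ENNReal.ofReal (stdGaussianPDFReal x) := by
  have hfinite : IsFiniteMeasure
      (volume.withDensity fun x : E => ENNReal.ofReal (stdGaussianPDFReal x)) :=
    isFiniteMeasure_withDensity_ofReal integrable_stdGaussianPDFReal.2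
  refine Measure.ext_of_charFun (funext fun t => ?_)
  rw [charFun_stdGaussian, charFun_apply,
    integral_withDensity_eq_integral_toReal_smul (by fun_prop) (by simp)]
  simp only [ENNReal.toReal_ofReal (stdGaussianPDFReal_nonneg _), Complex.real_smul,
    integral_stdGaussianPDFReal_mul_cexp_inner]

lemma stdGaussian_absolutelyContinuous : stdGaussian E ≪ volume :=
  stdGaussian_eq_withDensity (E := E) ▸ withDensity_absolutelyContinuous _ _

lemma map_diag_add_prod_stdGaussian (θ : E) :
    ((stdGaussian E).prod (stdGaussian E)).map ((θ, θ) + ·) =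
      volume.withDensity fun x => ENNReal.ofReal ((2 * Real.pi) ^ (-(Module.finrank ℝ E : ℝ)) *
        Real.exp (-(‖x.1 - θ‖ ^ 2 + ‖x.2 - θ‖ ^ 2) / 2)) := by
  rw [stdGaussian_eq_withDensity, prod_withDensity (by fun_prop) (by fun_prop),
    ← Measure.volume_eq_prod, map_add_left_withDensity]
  simp only [← ENNReal.ofReal_mul (stdGaussianPDFReal_nonneg _),
    stdGaussianPDFReal_mul_stdGaussianPDFReal, Prod.neg_mk, Prod.fst_add, Prod.snd_add,
    neg_add_eq_sub]

lemma map_inner_stdGaussian_of_norm_eq_one {v : E} (hv : ‖v‖ = 1) :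
    (stdGaussian E).map (fun y => ⟪v, y⟫) = gaussianReal 0 1 := by
  have h := IsGaussian.map_eq_gaussianReal (μ := stdGaussian E) (innerSL ℝ v)
  rw [integral_strongDual_stdGaussian, variance_dual_stdGaussian, innerSL_apply_norm, hv] at h
  simpa using h

end StdGaussian

section MoranRegion

variable {E : Type*} [NormedAddCommGroup E] [InnerProductSpace ℝ E]

/-- The rejection zone of Moran's test with threshold `D`: the projection of the second observation
on the direction of the first one exceeds `D`. -/
def moranRegion (E : Type*) [NormedAddCommGroup E] [InnerProductSpace ℝ E] (D : ℝ) :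
    Set (E × E) :=
  {x | x.1 ≠ 0 ∧ D < ⟪x.1, x.2⟫ / ‖x.1‖}

lemma mem_moranRegion_iff {D : ℝ} {x : E × E} :
    x ∈ moranRegion E D ↔ D * ‖x.1‖ < ⟪x.1, x.2⟫ := by
  rcases eq_or_ne x.1 0 with hx | hx
  · simp [moranRegion, hx]
  · simp [moranRegion, hx, lt_div_iff₀ (norm_pos_iff.2 hx)]

lemma isOpen_moranRegion (D : ℝ) : IsOpen (moranRegion E D) := by
  have hregion : moranRegion E D = {x | D * ‖x.1‖ < ⟪x.1, x.2⟫} :=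
    Set.ext fun _ => mem_moranRegion_iff
  rw [hregion]
  exact isOpen_lt (by fun_prop) (by fun_prop)

lemma mem_moranRegion_of_add_norm_sub_lt {D : ℝ} {x : E × E} (hx : x.1 ≠ 0)
    (h : D + ‖x.2 - x.1‖ < ‖x.1‖) : x ∈ moranRegion E D := by
  have hpos : 0 < ‖x.1‖ := norm_pos_iff.2 hx
  rw [mem_moranRegion_iff]
  calc D * ‖x.1‖ < (‖x.1‖ - ‖x.2 - x.1‖) * ‖x.1‖ :=
        mul_lt_mul_of_pos_right (by linarith) hpos
    _ = ‖x.1‖ ^ 2 - ‖x.1‖ * ‖x.2 - x.1‖ := by ring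
    _ ≤ ‖x.1‖ ^ 2 + ⟪x.1, x.2 - x.1⟫ := by
      linarith [neg_le_of_abs_le (abs_real_inner_le_norm x.1 (x.2 - x.1))]
    _ = ⟪x.1, x.2⟫ := by rw [inner_sub_right, real_inner_self_eq_norm_sq]; ring

lemma eventually_diag_add_mem_moranRegion (D : ℝ) (u : E × E) :
    ∀ᶠ θ in Bornology.cobounded E, (θ, θ) + u ∈ moranRegion E D := by
  have hnorm : Tendsto (fun θ => ‖θ + u.1‖) (Bornology.cobounded E) atTop :=
    tendsto_norm_cobounded_atTop.comp (tendsto_add_const_cobounded u.1)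
  filter_upwards [hnorm.eventually_gt_atTop 0, hnorm.eventually_gt_atTop (D + ‖u.2 - u.1‖)]
    with θ hpos hlt
  exact mem_moranRegion_of_add_norm_sub_lt (norm_pos_iff.1 hpos) (by simpa using hlt)

variable [MeasurableSpace E] [BorelSpace E]

lemma measurableSet_moranRegion [SecondCountableTopology E] (D : ℝ) :
    MeasurableSet (moranRegion E D) :=
  (isOpen_moranRegion D).measurableSet

lemma tendsto_measureReal_map_diag_add_moranRegion [SecondCountableTopology E]
    (ν : Measure (E × E)) [IsProbabilityMeasure ν] (D : ℝ) :
    Tendsto (fun θ => (ν.map ((θ, θ) + ·)).real (moranRegion E D)) (Bornology.cobounded E)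
      (nhds 1) := by
  have hcountable : (Bornology.cobounded E).IsCountablyGenerated := by
    rw [← comap_norm_atTop]
    infer_instance
  have hlim := tendsto_measure_of_tendsto_indicator_of_isFiniteMeasure (A := Set.univ) _ ν
    (fun θ => measurable_const_add (θ, θ) (measurableSet_moranRegion D))
    (by simpa using eventually_diag_add_mem_moranRegion D)
  rw [measure_univ] at hlim
  refine ((ENNReal.tendsto_toReal ENNReal.one_ne_top).comp hlim).congr fun θ => ?_
  exact (map_measureReal_apply (measurable_const_add _) (measurableSet_moranRegion D)).symm

variable [FiniteDimensional ℝ E]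

lemma stdGaussian_preimage_mk_moranRegion {x : E} (hx : x ≠ 0) (D : ℝ) :
    stdGaussian E (Prod.mk x ⁻¹' moranRegion E D) = gaussianReal 0 1 (Set.Ioi D) := by
  rw [← map_inner_stdGaussian_of_norm_eq_one (norm_smul_inv_norm (𝕜 := ℝ) hx),
    Measure.map_apply (by fun_prop) measurableSet_Ioi]
  congr 1
  ext y
  simp [moranRegion, hx, real_inner_smul_left, div_eq_inv_mul]

lemma prod_stdGaussian_moranRegion {μ : Measure E} [IsProbabilityMeasure μ]
    (hμ : ∀ᵐ x ∂μ, x ≠ 0) (D : ℝ) :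
    μ.prod (stdGaussian E) (moranRegion E D) = gaussianReal 0 1 (Set.Ioi D) := by
  rw [Measure.prod_apply (measurableSet_moranRegion D),
    lintegral_congr_ae (hμ.mono fun x hx => stdGaussian_preimage_mk_moranRegion hx D)]
  simp

lemma continuous_measureReal_map_diag_add_moranRegion {ν : Measure (E × E)} [IsFiniteMeasure ν]
    (hν : ν ≪ volume) (D : ℝ) :
    Continuous fun θ => (ν.map ((θ, θ) + ·)).real (moranRegion E D) :=
  (continuous_measureReal_map_add_left hν (measurableSet_moranRegion D)).comp
    (continuous_id.prodMk continuous_id)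

end MoranRegion

theorem stmt_15_general {E : Type*} [NormedAddCommGroup E] [InnerProductSpace ℝ E]
    [FiniteDimensional ℝ E] [Nontrivial E] [MeasurableSpace E] [BorelSpace E]
    (P : E → Measure (E × E))
    (hP : P = fun θ =>
      volume.withDensity fun x => ENNReal.ofReal ((2 * Real.pi) ^ (-(Module.finrank ℝ E : ℝ)) *
        Real.exp (-(‖x.1 - θ‖ ^ 2 + ‖x.2 - θ‖ ^ 2) / 2)))
    (α D : ℝ) (hD : (gaussianReal 0 1 (Set.Ioi D)).toReal = α)
    (β : E → ℝ) (hβ : β = fun θ => (P θ {x | x.1 ≠ 0 ∧ D < ⟪x.1, x.2⟫ / ‖x.1‖}).toReal) :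
    β 0 = α ∧ Continuous β ∧
      (∀ ε : ℝ, 0 < ε → ∃ R : ℝ, ∀ θ, R < ‖θ‖ → 1 - ε < β θ) ∧
      (∀ ε : ℝ, 0 < ε → ∃ K : Set E, IsCompact K ∧ {θ : E | ε ≤ 1 - β θ} ⊆ K) := by
  set γ := stdGaussian E
  have hpower : β = fun θ => ((γ.prod γ).map ((θ, θ) + ·)).real (moranRegion E D) := by
    simp only [hβ, hP, ← map_diag_add_prod_stdGaussian]
    rfl
  have hne : ∀ᵐ x ∂γ, x ≠ 0 := stdGaussian_absolutelyContinuous.ae_le (volume.ae_ne 0)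
  have hac : γ.prod γ ≪ volume :=
    stdGaussian_absolutelyContinuous.prod stdGaussian_absolutelyContinuous
  have hevent (ε : ℝ) (hε : 0 < ε) : ∀ᶠ θ in Bornology.cobounded E, 1 - ε < β θ := by
    rw [hpower]
    exact (tendsto_measureReal_map_diag_add_moranRegion _ D).eventually_const_lt (by linarith)
  refine ⟨?_, hpower ▸ continuous_measureReal_map_diag_add_moranRegion hac D, fun ε hε => ?_,
    fun ε hε => ?_⟩
  · simp [hpower, ← Prod.zero_eq_mk, measureReal_def, prod_stdGaussian_moranRegion hne, γ, hD]
  · obtain ⟨R, -, hR⟩ := Filter.hasBasis_cobounded_norm.eventually_iff.1 (hevent ε hε)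
    exact ⟨R, fun θ hθ => hR hθ.le⟩
  · have hbounded : Bornology.IsBounded {θ | ε ≤ 1 - β θ} :=
      Bornology.isBounded_def.2 <|
        (hevent ε hε).mono fun θ hθ (hle : ε ≤ 1 - β θ) => by linarith
    exact ⟨_, hbounded.isCompact_closure, subset_closure⟩

/- STATEMENT 15: Moran's multi-dimensional Gaussian test φ is a regular test of level
α: β_φ(0) = α, θ ↦ β_φ(θ) is continuous on ℝ^d, and β_φ(θ) → 1 as ‖θ‖ → ∞; that is,
φ ∈ Φ₀(α). -/
theorem stmt_15
    (d : ℕ) (hd : 1 ≤ d)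
    -- P θ is the law of (U₁ + θ, U₂ + θ) for U₁, U₂ i.i.d. standard Gaussians in ℝ^d
    (P : EuclideanSpace ℝ (Fin d) → Measure (EuclideanSpace ℝ (Fin d) × EuclideanSpace ℝ (Fin d)))
    (hP : P = fun θ =>
      (volume : Measure (EuclideanSpace ℝ (Fin d) × EuclideanSpace ℝ (Fin d))).withDensity
        (fun x => ENNReal.ofReal ((2 * Real.pi) ^ (-(d : ℝ)) *
          Real.exp (-(‖x.1 - θ‖ ^ 2 + ‖x.2 - θ‖ ^ 2) / 2))))
    (α : ℝ) (hα : α ∈ Set.Ioo (0 : ℝ) 1)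
    -- D is the upper α-quantile of the standard one-dimensional Gaussian
    (D : ℝ) (hD : (gaussianReal 0 1 (Set.Ioi D)).toReal = α)
    -- β is the power function of Moran's test, the indicator of the rejection zone
    (β : EuclideanSpace ℝ (Fin d) → ℝ)
    (hβ : β = fun θ => ((P θ)
      {x : EuclideanSpace ℝ (Fin d) × EuclideanSpace ℝ (Fin d) |
        x.1 ≠ 0 ∧ D < ⟪x.1, x.2⟫ / ‖x.1‖}).toReal) :
    β 0 = α ∧ Continuous β ∧
      (∀ ε : ℝ, 0 < ε → ∃ R : ℝ, ∀ θ, R < ‖θ‖ → 1 - ε < β θ) ∧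
      (∀ ε : ℝ, 0 < ε → ∃ K : Set (EuclideanSpace ℝ (Fin d)), IsCompact K ∧
        {θ : EuclideanSpace ℝ (Fin d) | ε ≤ 1 - β θ} ⊆ K) := by
  have : Nonempty (Fin d) := ⟨⟨0, hd⟩⟩
  exact stmt_15_general P (by rwa [finrank_euclideanSpace_fin]) α D hD β hβ
end
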